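/- arXiv:1606.06917 — 2 statements merged into one kernel-verified Lean document; each statement's English description precedes it below -/
import Mathlib

section
/- Let L ≥ M ≥ 0 be integers, η, ξ₊, ξ₋ ∈ ℂ, and let x_1,…,x_L, z_1,…,z_M ∈ ℂ be nonzero with x_1²,…,x_L² pairwise distinct, z_1²,…,z_M² pairwise distinct, and (x_i ± η/2)² ≠ z_k² and (z_k ± η/2)² ≠ x_i² for all i,k. Then A_{{x}}[f_{ξ₊,ξ₋,{z}}] = (−1)^M · 2^{L−M} · ∏_{j=0}^{L−M−1}(ξ₊+ξ₋+jη) · A_{{z}}[f_{−ξ₊+η/2, −ξ₋+η/2, {x}}]. -/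
open Finset

/-- `A_{{u}}[f]` as a ratio of determinants. -/
noncomputable def Afun {K : ℕ} (η : ℂ) (u : Fin K → ℂ) (f : ℂ → ℂ) : ℂ :=
  Matrix.det (Matrix.of fun i j : Fin K =>
      f (u i) * (u i + η / 2) ^ (2 * (j : ℕ)) + f (-u i) * (u i - η / 2) ^ (2 * (j : ℕ)))
    / Matrix.det (Matrix.of fun i j : Fin K => u i ^ (2 * (j : ℕ)))

/-- `f_{ξ₊,ξ₋,{v}}(λ) = ((λ+ξ₊)(λ+ξ₋)/λ) ∏_m (λ²−v_m²)/((λ+η/2)²−v_m²)`. -/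
noncomputable def fFun (η ξp ξm : ℂ) {M : ℕ} (v : Fin M → ℂ) (lam : ℂ) : ℂ :=
  ((lam + ξp) * (lam + ξm) / lam) *
    ∏ m, ((lam ^ 2 - v m ^ 2) / ((lam + η / 2) ^ 2 - v m ^ 2))

/-!
Write `h = η/2` and `Z(w) = ∏ k, (w - z_k²)`. Up to the factor `Z(x_i²)`, the numerator entries of
`A_{x}[f_{ξ₊,ξ₋,{z}}]` are shift sums of `p/Z`, where `p` runs over the powers of `w`. Splitting
`p/Z` into partial fractions and a polynomial part factors the numerator matrix through the kernel
matrix `K(x_i, z_k)` completed by `L - M` columns of polynomials in `x_i²`. The kernel is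
symmetric under exchanging `x` with `z` and `ξ±` with `-ξ± + h`, so the determinant on the `z`
side involves only the transpose of `K`. Finally, multiplying by the transposed Vandermonde matrix
in `x_i²`, weighted by the Lagrange weights, annihilates the polynomial columns against the powers
below `M`, and on the remaining powers leaves an antitriangular block with antidiagonal entries
`2(ξ₊ + ξ₋ + 2jh)`.
-/

section ShiftDeterminants

open Polynomial Matrix

section CommRing

variable {R : Type*} [CommRing R]

lemma det_of_antitriangular : ∀ {n : ℕ} (H : Matrix (Fin n) (Fin n) R),
    (∀ i j : Fin n, (i : ℕ) + j + 1 < n → H i j = 0) →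
      H.det = (-1) ^ n.choose 2 * ∏ j, H j.rev j
  | 0, H, _ => by simp
  | n + 1, H, hH => by
    have hrow : ∀ j ≠ Fin.last n, H 0 j = 0 := fun j hj =>
      hH 0 j (by have := Fin.val_lt_last hj; simp only [Fin.val_zero]; omega)
    have hminor : (H.submatrix Fin.succ Fin.castSucc).det =
        (-1) ^ n.choose 2 * ∏ j : Fin n, H j.rev.succ j.castSucc :=
      det_of_antitriangular _ fun i j hij =>
        hH _ _ (by simp only [Fin.val_succ, Fin.val_castSucc]; omega)
    rw [det_succ_row_zero, sum_eq_single (Fin.last n) (fun j _ hj => by simp [hrow j hj]) (by simp),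
      Fin.succAbove_last, hminor, Fin.prod_univ_castSucc, Nat.choose_succ_succ' n 1,
      Nat.choose_one_right, pow_add]
    simp only [Fin.val_last, Fin.rev_last, Fin.rev_castSucc]
    ring

lemma add_choose_two (m n : ℕ) :
    (m + n).choose 2 = m.choose 2 + n.choose 2 + m * n := by
  induction n with
  | zero => simp
  | succ n ih =>
    rw [← add_assoc, Nat.choose_succ_succ', Nat.choose_succ_succ' n, ih, Nat.choose_one_right,
      Nat.choose_one_right]
    ring

lemma neg_one_pow_choose_two_mul (m n : ℕ) :
    (-1 : R) ^ ((m + n) * m) * (-1) ^ m.choose 2 * (-1) ^ n.choose 2 * (-1) ^ (m + n).choose 2 =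
      (-1) ^ m := by
  simp only [← pow_add]
  refine neg_one_pow_congr ?_
  rw [add_choose_two]
  simp only [Nat.even_add, Nat.even_mul]
  tauto

lemma prod_fin_two_mul_add (h c : R) (N : ℕ) :
    ∏ j : Fin N, 2 * (c + 2 * j * h) = 2 ^ N * ∏ j ∈ range N, (c + j * (2 * h)) := by
  rw [prod_mul_distrib, prod_const, card_fin, prod_range]
  simp only [mul_left_comm, mul_assoc]

lemma natDegree_X_pow_divByMonic [Nontrivial R] {g : R[X]} (hg : g.Monic) (n : ℕ) :
    (X ^ (g.natDegree + n) /ₘ g).natDegree = n := by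
  rw [natDegree_divByMonic _ hg, natDegree_X_pow, Nat.add_sub_cancel_left]

lemma monic_X_pow_divByMonic [Nontrivial R] {g : R[X]} (hg : g.Monic) (n : ℕ) :
    (X ^ (g.natDegree + n) /ₘ g).Monic := by
  have hdeg : g.degree ≤ (X ^ (g.natDegree + n) : R[X]).degree := by
    rw [degree_eq_natDegree hg.ne_zero, degree_X_pow]
    exact_mod_cast Nat.le_add_right _ _
  rw [Monic, leadingCoeff_divByMonic_of_monic hg hdeg, leadingCoeff_X_pow]

lemma eval_modByMonic_nodal {ι : Type*} [Fintype ι] (v : ι → R) (P : R[X]) (i : ι) :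
    (P %ₘ Lagrange.nodal univ v).eval (v i) = P.eval (v i) := by
  conv_rhs => rw [← modByMonic_add_div P (Lagrange.nodal univ v)]
  simp [Lagrange.eval_nodal_at_node]

lemma prod_eval_nodal_comm {ι κ : Type*} [Fintype ι] [Fintype κ] (v : ι → R) (w : κ → R) :
    ∏ i, (Lagrange.nodal univ w).eval (v i) =
      (-1) ^ (Fintype.card ι * Fintype.card κ) * ∏ k, (Lagrange.nodal univ v).eval (w k) := by
  simp only [Lagrange.eval_nodal]
  rw [prod_comm, ← card_univ (α := ι), pow_mul, ← card_univ (α := κ), ← prod_const,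
    ← prod_mul_distrib]
  refine prod_congr rfl fun k _ => ?_
  rw [← prod_const, ← prod_mul_distrib]
  exact prod_congr rfl fun i _ => by ring

/-- The polynomial `Q` with `u * Q(u²) = P(u) - P(-u)`: twice the odd part of `P`, divided by the
variable and rewritten in its square. -/
noncomputable def oddQuotient (P : R[X]) : R[X] :=
  C 2 * contract 2 P.divX

lemma coeff_oddQuotient (P : R[X]) (n : ℕ) :
    (oddQuotient P).coeff n = 2 * P.coeff (2 * n + 1) := by
  rw [oddQuotient, coeff_C_mul, coeff_contract two_ne_zero, coeff_divX, mul_comm n]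

lemma expand_contract_two_add (P : R[X]) :
    expand R 2 (contract 2 P) + X * expand R 2 (contract 2 P.divX) = P := by
  ext n
  rcases n with _ | n
  · simp [coeff_expand, coeff_contract]
  · rw [coeff_add, coeff_X_mul, coeff_expand two_pos, coeff_expand two_pos,
      coeff_contract two_ne_zero, coeff_contract two_ne_zero, coeff_divX]
    obtain ⟨k, rfl | rfl⟩ := Nat.even_or_odd' n
    · rw [if_neg (by omega), if_pos (by omega), zero_add]
      congr 1
      omega
    · rw [if_pos (by omega), if_neg (by omega), add_zero]
      congr 1
      omega

lemma mul_eval_oddQuotient (P : R[X]) (u : R) :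
    u * (oddQuotient P).eval (u ^ 2) = P.eval u - P.eval (-u) := by
  conv_rhs => rw [← expand_contract_two_add P]
  simp only [oddQuotient, eval_add, eval_mul, eval_X, eval_C, expand_eval, neg_sq]
  ring

/-- The operation `p ↦ f(u) p((u+h)²) + f(-u) p((u-h)²)` which for monomials `p` gives the entries
of the numerator determinant of `A_{u}[f]`; throughout `h` stands for `η/2`. -/
def shiftSum (h : R) (f p : R → R) (u : R) : R :=
  f u * p ((u + h) ^ 2) + f (-u) * p ((u - h) ^ 2)

/-- The polynomial whose value at `u²` is the shift sum of `p` against the function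
`(u + a)(u + b)/u`. -/
noncomputable def shiftSumPoly (h a b : R) (p : R[X]) : R[X] :=
  oddQuotient ((X + C a) * (X + C b) * p.comp ((X + C h) ^ 2))

lemma natDegree_mul_mul_X_add_C_pow [Nontrivial R] (a b h : R) (k : ℕ) :
    ((X + C a) * (X + C b) * (X + C h) ^ k).natDegree = k + 2 := by
  rw [((monic_X_add_C a).mul (monic_X_add_C b)).natDegree_mul ((monic_X_add_C h).pow k),
    (monic_X_add_C a).natDegree_mul (monic_X_add_C b), (monic_X_add_C h).natDegree_pow]
  simp only [natDegree_X_add_C]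
  ring

lemma coeff_mul_mul_X_add_C_pow (a b h : R) (k : ℕ) :
    ((X + C a) * (X + C b) * (X + C h) ^ k).coeff (k + 1) = a + b + k * h := by
  nontriviality R
  have hnext := nextCoeff_of_natDegree_pos (p := (X + C a) * (X + C b) * (X + C h) ^ k)
    (by rw [natDegree_mul_mul_X_add_C_pow]; omega)
  rw [natDegree_mul_mul_X_add_C_pow] at hnext
  rw [show k + 1 = k + 2 - 1 from rfl, ← hnext,
    ((monic_X_add_C a).mul (monic_X_add_C b)).nextCoeff_mul ((monic_X_add_C h).pow k),
    (monic_X_add_C a).nextCoeff_mul (monic_X_add_C b), (monic_X_add_C h).nextCoeff_pow]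
  simp only [nextCoeff_X_add_C, nsmul_eq_mul]

lemma coeff_mul_comp_sq (h a b : R) {n : ℕ} {p : R[X]} (hp : p.natDegree ≤ n) :
    ((X + C a) * (X + C b) * p.comp ((X + C h) ^ 2)).coeff (2 * n + 1) =
      (a + b + 2 * n * h) * p.coeff n := by
  nontriviality R
  refine induction_with_natDegree_le (fun p : R[X] =>
    ((X + C a) * (X + C b) * p.comp ((X + C h) ^ 2)).coeff (2 * n + 1) =
      (a + b + 2 * n * h) * p.coeff n) n (by simp) (fun k r _ hk => ?_)
    (fun p q _ _ hp hq => by rw [add_comp, mul_add, coeff_add, hp, hq, coeff_add, mul_add]) p hp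
  rw [mul_comp, C_comp, pow_comp, X_comp, ← pow_mul, mul_left_comm, coeff_C_mul, coeff_C_mul_X_pow]
  rcases hk.eq_or_lt with rfl | hlt
  · rw [coeff_mul_mul_X_add_C_pow, if_pos rfl]
    push_cast
    ring
  · have hdeg := natDegree_mul_mul_X_add_C_pow a b h (2 * k)
    rw [if_neg hlt.ne', mul_zero, coeff_eq_zero_of_natDegree_lt (by omega), mul_zero]

lemma coeff_shiftSumPoly (h a b : R) {n : ℕ} {p : R[X]} (hp : p.natDegree ≤ n) :
    (shiftSumPoly h a b p).coeff n = 2 * (a + b + 2 * n * h) * p.coeff n := by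
  rw [shiftSumPoly, coeff_oddQuotient, coeff_mul_comp_sq h a b hp]
  ring

lemma natDegree_shiftSumPoly_le (h a b : R) (p : R[X]) :
    (shiftSumPoly h a b p).natDegree ≤ p.natDegree := by
  refine natDegree_le_iff_coeff_eq_zero.2 fun n hn => ?_
  rw [coeff_shiftSumPoly h a b hn.le, coeff_eq_zero_of_natDegree_lt hn, mul_zero]

lemma shiftSumPoly_zero (h a b : R) : shiftSumPoly h a b 0 = 0 := by
  ext n
  simp [shiftSumPoly, coeff_oddQuotient]

/-- The rectangular matrix of values `p j (v i)`, a Vandermonde matrix for `p j = X ^ j`. -/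
def evalMatrix {ι κ : Type*} (v : ι → R) (p : κ → R[X]) : Matrix ι κ R :=
  of fun i j => (p j).eval (v i)

lemma evalMatrix_sumElim {ι κ τ : Type*} (v : ι → R) (p : κ → R[X]) (q : τ → R[X]) :
    evalMatrix v (Sum.elim p q) = fromCols (evalMatrix v p) (evalMatrix v q) := by
  ext i (j | j) <;> rfl

/-- The matrix of shift sums in the numerator of `A_{u}[f]`, with the powers of `(u ± h)²` replaced
by an arbitrary family `p` of polynomials in the squared variable. -/
def shiftMatrix {ι κ : Type*} (h : R) (f : R → R) (u : ι → R) (p : κ → R[X]) : Matrix ι κ R :=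
  of fun i j => shiftSum h f (p j).eval (u i)

lemma shiftMatrix_sumElim {ι κ τ : Type*} (h : R) (f : R → R) (u : ι → R) (p : κ → R[X])
    (q : τ → R[X]) :
    shiftMatrix h f u (Sum.elim p q) = fromCols (shiftMatrix h f u p) (shiftMatrix h f u q) := by
  ext i (j | j) <;> rfl

lemma X_pow_finSumFinEquiv {M N : ℕ} :
    (fun j : Fin M ⊕ Fin N => (X : R[X]) ^ (finSumFinEquiv j : ℕ)) =
      Sum.elim (fun i : Fin M => X ^ (i : ℕ)) fun i : Fin N => X ^ (M + i : ℕ) := by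
  ext1 (j | j) <;> rfl

lemma degree_X_pow_val_lt [Nontrivial R] {M n : ℕ} (hn : M ≤ n) (j : Fin M) :
    (X ^ (j : ℕ) : R[X]).degree < n := by
  rw [degree_X_pow]
  exact_mod_cast j.2.trans_le hn

end CommRing

section Lagrange

variable {F ι κ τ : Type*} [Field F] [Fintype ι] [DecidableEq ι]

lemma sum_nodalWeight_mul_eval {v : ι → F} (hv : Function.Injective v) {P : F[X]}
    (hP : P.degree < Fintype.card ι) :
    ∑ i, Lagrange.nodalWeight univ v i * P.eval (v i) = P.coeff (Fintype.card ι - 1) := by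
  rw [← card_univ, Lagrange.coeff_eq_sum hv.injOn hP]
  simp only [Lagrange.nodalWeight, prod_inv_distrib, div_eq_inv_mul]

lemma eval_div_eval_nodal {v : ι → F} (hv : Function.Injective v) (P : F[X]) {t : F}
    (ht : ∀ i, t ≠ v i) :
    P.eval t / (Lagrange.nodal univ v).eval t =
      ∑ i, Lagrange.nodalWeight univ v i * P.eval (v i) * (t - v i)⁻¹ +
        (P /ₘ Lagrange.nodal univ v).eval t := by
  have hmonic : (Lagrange.nodal univ v).Monic := Lagrange.nodal_monic
  have hnodal : (Lagrange.nodal univ v).eval t ≠ 0 :=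
    Lagrange.eval_nodal_not_at_node fun i _ => ht i
  have hrem : P %ₘ Lagrange.nodal univ v = Lagrange.interpolate univ v fun i => P.eval (v i) :=
    Lagrange.eq_interpolate_of_eval_eq _ hv.injOn
      ((degree_modByMonic_lt P hmonic).trans_eq Lagrange.degree_nodal)
      fun i _ => eval_modByMonic_nodal v P i
  rw [div_eq_iff hnodal]
  conv_lhs => rw [← modByMonic_add_div P (Lagrange.nodal univ v)]
  rw [eval_add, eval_mul, hrem,
    Lagrange.eval_interpolate_not_at_node _ fun i _ => ht i, add_mul, mul_comm (eval t _),
    mul_comm (eval t _)]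
  simp only [mul_right_comm]

/-- The Gram matrix of the families `p` and `q` for the bilinear form
`(P, Q) ↦ ∑ i, P(v i) Q(v i) / ∏_{l ≠ i} (v i - v l)`, which by Lagrange interpolation reads off the
coefficient of `P * Q` in degree `card ι - 1`. -/
noncomputable def nodalGram (v : ι → F) (p : κ → F[X]) (q : τ → F[X]) : Matrix κ τ F :=
  (evalMatrix v p)ᵀ * diagonal (Lagrange.nodalWeight univ v) * evalMatrix v q

lemma nodalGram_apply {v : ι → F} (hv : Function.Injective v) {p : κ → F[X]} {q : τ → F[X]}
    {j : κ} {k : τ} (hpq : (p j * q k).natDegree < Fintype.card ι) :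
    nodalGram v p q j k = (p j * q k).coeff (Fintype.card ι - 1) := by
  rw [← sum_nodalWeight_mul_eval hv (degree_le_natDegree.trans_lt (Nat.cast_lt.2 hpq)), nodalGram,
    mul_apply]
  refine sum_congr rfl fun i _ => ?_
  simp only [evalMatrix, mul_diagonal, transpose_apply, of_apply, eval_mul]
  ring

lemma nodalGram_X_pow_eq_zero {m n : ℕ} (hcard : Fintype.card ι = m + n) {v : ι → F}
    (hv : Function.Injective v) {q : Fin n → F[X]} (hq : ∀ j, (q j).natDegree ≤ j) :
    nodalGram v (fun i : Fin m => X ^ (i : ℕ)) q = 0 := by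
  ext i j
  have hdeg : (X ^ (i : ℕ) * q j).natDegree ≤ (i : ℕ) + j :=
    natDegree_mul_le_of_le (natDegree_X_pow_le _) (hq j)
  rw [nodalGram_apply hv (by omega), coeff_eq_zero_of_natDegree_lt (by omega), Matrix.zero_apply]

lemma det_nodalGram_X_pow {m n : ℕ} (hcard : Fintype.card ι = m + n) {v : ι → F}
    (hv : Function.Injective v) {q : Fin n → F[X]} (hq : ∀ j, (q j).natDegree ≤ j) :
    (nodalGram v (fun i : Fin n => X ^ (m + i : ℕ)) q).det =
      (-1) ^ n.choose 2 * ∏ j, (q j).coeff j := by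
  have hdeg (i j : Fin n) : (X ^ (m + i : ℕ) * q j).natDegree ≤ m + i + j :=
    natDegree_mul_le_of_le (natDegree_X_pow_le _) (hq j)
  have hentry (i j : Fin n) (hij : (i : ℕ) + j < n) :
      nodalGram v (fun i : Fin n => X ^ (m + i : ℕ)) q i j =
        (X ^ (m + i : ℕ) * q j).coeff (m + n - 1) := by
    rw [← hcard]
    exact nodalGram_apply hv ((hdeg i j).trans_lt (by omega))
  rw [det_of_antitriangular]
  · congr 1
    refine prod_congr rfl fun j _ => ?_
    have hrev : (j.rev : ℕ) + j + 1 = n := by rw [Fin.val_rev]; omega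
    rw [hentry _ _ (by omega), show m + n - 1 = j + (m + j.rev : ℕ) by omega, coeff_X_pow_mul]
  · intro i j hij
    rw [hentry i j (by omega)]
    exact coeff_eq_zero_of_natDegree_lt ((hdeg i j).trans_lt (by omega))

lemma det_evalMatrix_X_pow_sq {n : ℕ} (e : ι ≃ Fin n) {v : ι → F} (hv : Function.Injective v) :
    (evalMatrix v fun j => X ^ (e j : ℕ)).det ^ 2 * ∏ i, Lagrange.nodalWeight univ v i =
      (-1) ^ n.choose 2 := by
  have hgram : nodalGram v (fun j => X ^ (e j : ℕ)) (fun j => X ^ (e j : ℕ)) =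
      (nodalGram v (fun i : Fin n => X ^ (0 + i : ℕ))
        fun j : Fin n => X ^ (j : ℕ)).submatrix e e := by
    simp only [zero_add]
    rfl
  have hdet := congrArg det hgram
  rw [det_submatrix_equiv_self, det_nodalGram_X_pow (by simpa using Fintype.card_congr e) hv
    fun j => natDegree_X_pow_le _, nodalGram, det_mul, det_mul, det_transpose, det_diagonal] at hdet
  simp only [coeff_X_pow_self, prod_const_one, mul_one] at hdet
  rw [← hdet]
  ring

lemma det_evalMatrix_X_pow_ne_zero {n : ℕ} (e : ι ≃ Fin n) {v : ι → F}
    (hv : Function.Injective v) : (evalMatrix v fun j => X ^ (e j : ℕ)).det ≠ 0 := fun hdet => by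
  have hsq := det_evalMatrix_X_pow_sq e hv
  rw [hdet, zero_pow two_ne_zero, zero_mul] at hsq
  exact pow_ne_zero _ (neg_ne_zero.2 one_ne_zero) hsq.symm

lemma det_evalMatrix_mul_det_fromCols [Fintype κ] [Fintype τ] [DecidableEq κ] [DecidableEq τ]
    {v : κ ⊕ τ → F} {p₁ : κ → F[X]} (p₂ : τ → F[X]) {q : τ → F[X]} (K : Matrix (κ ⊕ τ) κ F)
    (hpq : nodalGram v p₁ q = 0) :
    (evalMatrix v (Sum.elim p₁ p₂)).det * (∏ i, Lagrange.nodalWeight univ v i) *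
        (fromCols K (evalMatrix v q)).det =
      ((evalMatrix v p₁)ᵀ * diagonal (Lagrange.nodalWeight univ v) * K).det *
        (nodalGram v p₂ q).det := by
  rw [← det_transpose, ← det_diagonal, ← det_mul, ← det_mul, evalMatrix_sumElim,
    transpose_fromCols, fromRows_mul, fromRows_mul_fromCols]
  change (fromBlocks _ (nodalGram v p₁ q) _ (nodalGram v p₂ q)).det = _
  rw [hpq, det_fromBlocks_zero₁₂]

end Lagrange

section DressedFactor

variable {F ι κ τ : Type*} [Field F]

/-- The factor `(u + a)(u + b)/u` of `f_{a,b,{v}}(u)`, with junk value `0` at `u = 0`. -/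
def prefactor (a b u : F) : F :=
  (u + a) * (u + b) / u

lemma shiftSum_prefactor_eval (h a b : F) (p : F[X]) {u : F} (hu : u ≠ 0) :
    shiftSum h (prefactor a b) p.eval u = (shiftSumPoly h a b p).eval (u ^ 2) := by
  refine mul_left_cancel₀ hu ?_
  rw [shiftSumPoly, mul_eval_oddQuotient]
  simp only [shiftSum, prefactor, eval_mul, eval_add, eval_X, eval_C, eval_comp, eval_pow,
    neg_add_eq_sub, sub_sq_comm h u]
  field_simp
  ring

/-- Nonvanishing of the denominators `(u ± h)² - v²` of the shift sums of `f_{a,b,{v}}` at `u`. -/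
def ShiftSeparated (h u v : F) : Prop :=
  (u + h) ^ 2 ≠ v ^ 2 ∧ (u - h) ^ 2 ≠ v ^ 2

lemma shiftSeparated_iff {h u v : F} :
    ShiftSeparated h u v ↔ ((u + h) ^ 2 - v ^ 2) * ((u - h) ^ 2 - v ^ 2) ≠ 0 := by
  rw [mul_ne_zero_iff, sub_ne_zero, sub_ne_zero, ShiftSeparated]

lemma ShiftSeparated.symm {h u v : F} (huv : ShiftSeparated h u v) : ShiftSeparated h v u := by
  rw [shiftSeparated_iff] at huv ⊢
  convert huv using 1
  ring

/-- The shift sum at `u` of the simple pole `w ↦ 1/(w - v²)`, the building block of the partial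
fraction expansion of the numerator entries. -/
def shiftKernel (h a b u v : F) : F :=
  shiftSum h (prefactor a b) (fun w => (w - v ^ 2)⁻¹) u

lemma shiftKernel_eq {h u v : F} (a b : F) (hu : u ≠ 0) (huv : ShiftSeparated h u v) :
    shiftKernel h a b u v =
      2 * ((a + b - 2 * h) * u ^ 2 + (a + b) * (h ^ 2 - v ^ 2) - 2 * h * a * b) /
        (((u + h) ^ 2 - v ^ 2) * ((u - h) ^ 2 - v ^ 2)) := by
  have hadd : (u + h) ^ 2 - v ^ 2 ≠ 0 := sub_ne_zero.2 huv.1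
  have hsub : (u - h) ^ 2 - v ^ 2 ≠ 0 := sub_ne_zero.2 huv.2
  rw [eq_div_iff (mul_ne_zero hadd hsub), shiftKernel, shiftSum, prefactor, prefactor]
  calc _ = ((u + a) * (u + b) * ((u - h) ^ 2 - v ^ 2) -
        (-u + a) * (-u + b) * ((u + h) ^ 2 - v ^ 2)) / u := by
        generalize (u + h) ^ 2 - v ^ 2 = A, (u - h) ^ 2 - v ^ 2 = B at hadd hsub ⊢
        field_simp
        ring
    _ = _ := by field_simp; ring

lemma shiftKernel_symm {h u v : F} (a b : F) (hu : u ≠ 0) (hv : v ≠ 0)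
    (huv : ShiftSeparated h u v) :
    shiftKernel h (-a + h) (-b + h) v u = shiftKernel h a b u v := by
  rw [shiftKernel_eq a b hu huv, shiftKernel_eq _ _ hv huv.symm]
  congr 1 <;> ring

/-- The matrix of kernels `shiftKernel h a b (u i) (v k)`, analogous to a Cauchy matrix. -/
def kernelMatrix (h a b : F) (u : ι → F) (v : κ → F) : Matrix ι κ F :=
  of fun i k => shiftKernel h a b (u i) (v k)

lemma kernelMatrix_symm {h : F} (a b : F) {u : ι → F} {v : κ → F} (hu : ∀ i, u i ≠ 0)
    (hv : ∀ k, v k ≠ 0) (huv : ∀ i k, ShiftSeparated h (u i) (v k)) :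
    kernelMatrix h (-a + h) (-b + h) v u = (kernelMatrix h a b u v)ᵀ := by
  ext k i
  exact shiftKernel_symm a b (hu i) (hv k) (huv i k)

variable [Fintype κ]

/-- The function `f_{a,b,{v}}` over an arbitrary field, with `h` in place of `η/2`. -/
def dressedFactor (h a b : F) (v : κ → F) (u : F) : F :=
  (u + a) * (u + b) / u * ∏ k, ((u ^ 2 - v k ^ 2) / ((u + h) ^ 2 - v k ^ 2))

lemma dressedFactor_comp_equiv [Fintype ι] (e : κ ≃ ι) (h a b : F) (v : ι → F) :
    dressedFactor h a b (v ∘ e) = dressedFactor h a b v := by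
  ext u
  exact congrArg _ (e.prod_comp fun i => (u ^ 2 - v i ^ 2) / ((u + h) ^ 2 - v i ^ 2))

lemma dressedFactor_eq (h a b : F) (v : κ → F) (u : F) :
    dressedFactor h a b v u = prefactor a b u *
      ((Lagrange.nodal univ (v ^ 2)).eval (u ^ 2) /
        (Lagrange.nodal univ (v ^ 2)).eval ((u + h) ^ 2)) := by
  simp only [dressedFactor, prefactor, prod_div_distrib, Lagrange.eval_nodal, Pi.pow_apply]

lemma shiftSum_dressedFactor (h a b : F) (v : κ → F) (p : F → F) (u : F) :
    shiftSum h (dressedFactor h a b v) p u =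
      (Lagrange.nodal univ (v ^ 2)).eval (u ^ 2) *
        shiftSum h (prefactor a b)
          (fun w => p w / (Lagrange.nodal univ (v ^ 2)).eval w) u := by
  simp only [shiftSum, dressedFactor_eq, neg_sq, neg_add_eq_sub, sub_sq_comm h u]
  ring

variable [DecidableEq κ]

lemma shiftSum_dressedFactor_eval {h u : F} (a b : F) {v : κ → F}
    (hv : Function.Injective (v ^ 2)) (hu : u ≠ 0) (huv : ∀ k, ShiftSeparated h u (v k))
    (p : F[X]) :
    shiftSum h (dressedFactor h a b v) p.eval u =
      (Lagrange.nodal univ (v ^ 2)).eval (u ^ 2) *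
        (∑ k, shiftKernel h a b u (v k) * Lagrange.nodalWeight univ (v ^ 2) k *
            p.eval (v k ^ 2) +
          (shiftSumPoly h a b (p /ₘ Lagrange.nodal univ (v ^ 2))).eval (u ^ 2)) := by
  rw [shiftSum_dressedFactor, ← shiftSum_prefactor_eval h a b _ hu]
  congr 1
  rw [shiftSum, eval_div_eval_nodal hv p fun k => (huv k).1,
    eval_div_eval_nodal hv p fun k => (huv k).2]
  simp only [shiftKernel, shiftSum, Pi.pow_apply, mul_add, add_mul, mul_sum, sum_add_distrib]
  rw [add_add_add_comm]
  congr 2 <;> exact sum_congr rfl fun k _ => by ring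

variable [Fintype ι] [DecidableEq ι]

lemma shiftMatrix_dressedFactor {h : F} (a b : F) {u : ι → F} {v : κ → F}
    (hv : Function.Injective (v ^ 2)) (hu : ∀ i, u i ≠ 0)
    (huv : ∀ i k, ShiftSeparated h (u i) (v k)) (p : τ → F[X]) :
    shiftMatrix h (dressedFactor h a b v) u p =
      diagonal (fun i => (Lagrange.nodal univ (v ^ 2)).eval (u i ^ 2)) *
        (kernelMatrix h a b u v * diagonal (Lagrange.nodalWeight univ (v ^ 2)) *
            evalMatrix (v ^ 2) p +
          evalMatrix (u ^ 2)
            fun j => shiftSumPoly h a b (p j /ₘ Lagrange.nodal univ (v ^ 2))) := by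
  ext i j
  rw [diagonal_mul, Matrix.add_apply, mul_apply]
  simp only [mul_diagonal, kernelMatrix, evalMatrix, shiftMatrix, of_apply, Pi.pow_apply,
    shiftSum_dressedFactor_eval a b hv (hu i) (huv i)]

lemma shiftMatrix_dressedFactor_of_degree_lt {h : F} (a b : F) {u : ι → F} {v : κ → F}
    (hv : Function.Injective (v ^ 2)) (hu : ∀ i, u i ≠ 0)
    (huv : ∀ i k, ShiftSeparated h (u i) (v k)) {p : τ → F[X]}
    (hp : ∀ j, (p j).degree < Fintype.card κ) :
    shiftMatrix h (dressedFactor h a b v) u p =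
      diagonal (fun i => (Lagrange.nodal univ (v ^ 2)).eval (u i ^ 2)) *
        (kernelMatrix h a b u v * diagonal (Lagrange.nodalWeight univ (v ^ 2)) *
          evalMatrix (v ^ 2) p) := by
  have hquot (j : τ) : p j /ₘ Lagrange.nodal univ (v ^ 2) = 0 :=
    (divByMonic_eq_zero_iff Lagrange.nodal_monic).2 ((hp j).trans_eq Lagrange.degree_nodal.symm)
  have hzero : evalMatrix (u ^ 2) (fun _ : τ => (0 : F[X])) = 0 :=
    Matrix.ext fun _ _ => eval_zero
  simp only [shiftMatrix_dressedFactor a b hv hu huv, hquot, shiftSumPoly_zero, hzero, add_zero]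

lemma det_shiftMatrix_sumElim [Fintype τ] [DecidableEq τ] {h : F} (a b : F) {u : κ ⊕ τ → F}
    {v : κ → F} (hv : Function.Injective (v ^ 2)) (hu : ∀ i, u i ≠ 0)
    (huv : ∀ i k, ShiftSeparated h (u i) (v k)) {p : κ → F[X]}
    (hp : ∀ j, (p j).degree < Fintype.card κ) (q : τ → F[X]) :
    (shiftMatrix h (dressedFactor h a b v) u (Sum.elim p q)).det =
      (∏ i, (Lagrange.nodal univ (v ^ 2)).eval (u i ^ 2)) *
        (fromCols (kernelMatrix h a b u v) (evalMatrix (u ^ 2)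
          fun j => shiftSumPoly h a b (q j /ₘ Lagrange.nodal univ (v ^ 2)))).det *
        ((∏ k, Lagrange.nodalWeight univ (v ^ 2) k) * (evalMatrix (v ^ 2) p).det) := by
  rw [shiftMatrix_sumElim, shiftMatrix_dressedFactor_of_degree_lt a b hv hu huv hp,
    shiftMatrix_dressedFactor a b hv hu huv, ← mul_fromCols]
  set Λ := diagonal (Lagrange.nodalWeight univ (v ^ 2))
  have hfactor (Q : Matrix (κ ⊕ τ) τ F) :
      fromCols (kernelMatrix h a b u v * Λ * evalMatrix (v ^ 2) p)
          (kernelMatrix h a b u v * Λ * evalMatrix (v ^ 2) q + Q) =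
        fromCols (kernelMatrix h a b u v) Q *
          fromBlocks (Λ * evalMatrix (v ^ 2) p) (Λ * evalMatrix (v ^ 2) q) 0 1 := by
    rw [fromCols_mul_fromBlocks, Matrix.mul_zero, Matrix.mul_one, add_zero, Matrix.mul_assoc,
      Matrix.mul_assoc]
  rw [hfactor, det_mul, det_mul, det_fromBlocks_zero₂₁, det_mul, det_diagonal, det_diagonal,
    det_one, mul_one, mul_assoc]

end DressedFactor

section Duality

variable {F : Type*} [Field F] {M N : ℕ}

/-- The polynomial in `u²` contributed to the shift sum of `X ^ (M + n)` by the polynomial part of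
`X ^ (M + n) / ∏ k, (X - (z k)²)`. -/
noncomputable def shiftQuotient (h a b : F) (z : Fin M → F) (n : ℕ) : F[X] :=
  shiftSumPoly h a b (X ^ (M + n) /ₘ Lagrange.nodal univ (z ^ 2))

lemma natDegree_shiftQuotient_le (h a b : F) (z : Fin M → F) (n : ℕ) :
    (shiftQuotient h a b z n).natDegree ≤ n := by
  have hdeg := natDegree_X_pow_divByMonic
    (Lagrange.nodal_monic (s := univ) (v := z ^ 2)) n
  rw [Lagrange.natDegree_nodal, card_fin] at hdeg
  exact (natDegree_shiftSumPoly_le h a b _).trans_eq hdeg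

lemma coeff_shiftQuotient (h a b : F) (z : Fin M → F) (n : ℕ) :
    (shiftQuotient h a b z n).coeff n = 2 * (a + b + 2 * n * h) := by
  have hmonic : (Lagrange.nodal univ (z ^ 2)).Monic := Lagrange.nodal_monic
  have hdeg := natDegree_X_pow_divByMonic hmonic n
  have hlead := monic_X_pow_divByMonic hmonic n
  rw [Lagrange.natDegree_nodal, card_fin] at hdeg hlead
  rw [Monic, leadingCoeff, hdeg] at hlead
  rw [shiftQuotient, coeff_shiftSumPoly h a b hdeg.le, hlead, mul_one]

lemma det_fromCols_kernelMatrix (h a b : F) {x : Fin M ⊕ Fin N → F} (z : Fin M → F)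
    (hx : Function.Injective (x ^ 2)) :
    (fromCols (kernelMatrix h a b x z)
        (evalMatrix (x ^ 2) fun j : Fin N => shiftQuotient h a b z j)).det =
      (-1) ^ (M + N).choose 2 * (-1) ^ N.choose 2 * (∏ j : Fin N, 2 * (a + b + 2 * j * h)) *
        ((evalMatrix (x ^ 2) fun j : Fin M => X ^ (j : ℕ))ᵀ *
          diagonal (Lagrange.nodalWeight univ (x ^ 2)) * kernelMatrix h a b x z).det *
        (evalMatrix (x ^ 2) fun j => X ^ (finSumFinEquiv j : ℕ)).det := by
  have hcard : Fintype.card (Fin M ⊕ Fin N) = M + N := by simp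
  have hdeg (j : Fin N) := natDegree_shiftQuotient_le h a b z j
  have hpair := det_evalMatrix_mul_det_fromCols (fun j : Fin N => X ^ (M + j : ℕ))
    (kernelMatrix h a b x z) (nodalGram_X_pow_eq_zero hcard hx hdeg)
  rw [← X_pow_finSumFinEquiv, det_nodalGram_X_pow hcard hx hdeg] at hpair
  simp only [coeff_shiftQuotient] at hpair
  set G := (fromCols (kernelMatrix h a b x z) _).det
  set V := (evalMatrix (x ^ 2) fun j => X ^ (finSumFinEquiv j : ℕ)).det
  have hV : V ^ 2 * ∏ i, Lagrange.nodalWeight univ (x ^ 2) i = (-1) ^ (M + N).choose 2 :=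
    det_evalMatrix_X_pow_sq finSumFinEquiv hx
  calc G = (-1) ^ (M + N).choose 2 * (-1) ^ (M + N).choose 2 * G := by
        rw [← mul_pow, neg_one_mul, neg_neg, one_pow, one_mul]
    _ = (-1) ^ (M + N).choose 2 * V * (V * (∏ i, Lagrange.nodalWeight univ (x ^ 2) i) * G) := by
        nth_rw 2 [← hV]
        ring
    _ = _ := by
        rw [hpair]
        ring

lemma det_shiftMatrix_mul_det_evalMatrix {h : F} (a b : F) {x : Fin M ⊕ Fin N → F}
    {z : Fin M → F} (hz : Function.Injective (z ^ 2)) (hx0 : ∀ i, x i ≠ 0)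
    (hxz : ∀ i k, ShiftSeparated h (x i) (z k)) :
    (shiftMatrix h (dressedFactor h a b z) x fun j => X ^ (finSumFinEquiv j : ℕ)).det *
        (evalMatrix (z ^ 2) fun j : Fin M => X ^ (j : ℕ)).det =
      (-1) ^ M.choose 2 * (∏ i, (Lagrange.nodal univ (z ^ 2)).eval (x i ^ 2)) *
        (fromCols (kernelMatrix h a b x z)
          (evalMatrix (x ^ 2) fun j : Fin N => shiftQuotient h a b z j)).det := by
  have hV := det_evalMatrix_X_pow_sq (Equiv.refl (Fin M)) hz
  rw [X_pow_finSumFinEquiv, det_shiftMatrix_sumElim a b hz hx0 hxz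
    fun j => (degree_X_pow_val_lt le_rfl j).trans_eq (by rw [Fintype.card_fin]), ← hV]
  simp only [shiftQuotient, Equiv.refl_apply]
  ring

lemma det_shiftMatrix_eq_det_kernelMatrix {h : F} (a b : F) {x : Fin M ⊕ Fin N → F}
    {z : Fin M → F} (hx : Function.Injective (x ^ 2)) (hx0 : ∀ i, x i ≠ 0) (hz0 : ∀ k, z k ≠ 0)
    (hxz : ∀ i k, ShiftSeparated h (x i) (z k)) :
    (shiftMatrix h (dressedFactor h (-a + h) (-b + h) x) z fun j : Fin M => X ^ (j : ℕ)).det =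
      (∏ k, (Lagrange.nodal univ (x ^ 2)).eval (z k ^ 2)) *
        ((evalMatrix (x ^ 2) fun j : Fin M => X ^ (j : ℕ))ᵀ *
          diagonal (Lagrange.nodalWeight univ (x ^ 2)) * kernelMatrix h a b x z).det := by
  rw [shiftMatrix_dressedFactor_of_degree_lt _ _ hx hz0 (fun k i => (hxz i k).symm) fun j =>
      (degree_X_pow_val_lt (Nat.le_add_right M N) j).trans_eq (by simp),
    det_mul, det_diagonal, kernelMatrix_symm a b hx0 hz0 hxz, ← det_transpose (_ᵀ * _ * _)]
  simp only [transpose_mul, transpose_transpose, diagonal_transpose, Matrix.mul_assoc]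

lemma det_shiftMatrix_duality {h : F} (a b : F) {x : Fin M ⊕ Fin N → F}
    {z : Fin M → F} (hx : Function.Injective (x ^ 2)) (hz : Function.Injective (z ^ 2))
    (hx0 : ∀ i, x i ≠ 0) (hz0 : ∀ k, z k ≠ 0) (hxz : ∀ i k, ShiftSeparated h (x i) (z k)) :
    (shiftMatrix h (dressedFactor h a b z) x fun j => X ^ (finSumFinEquiv j : ℕ)).det *
        (evalMatrix (z ^ 2) fun j : Fin M => X ^ (j : ℕ)).det =
      (-1) ^ M * (∏ j : Fin N, 2 * (a + b + 2 * j * h)) *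
        (shiftMatrix h (dressedFactor h (-a + h) (-b + h) x) z
          fun j : Fin M => X ^ (j : ℕ)).det *
        (evalMatrix (x ^ 2) fun j => X ^ (finSumFinEquiv j : ℕ)).det := by
  have hprod := prod_eval_nodal_comm (x ^ 2) (z ^ 2)
  simp only [Pi.pow_apply, Fintype.card_sum, Fintype.card_fin] at hprod
  rw [det_shiftMatrix_mul_det_evalMatrix a b hz hx0 hxz, hprod,
    det_fromCols_kernelMatrix h a b z hx,
    det_shiftMatrix_eq_det_kernelMatrix a b hx hx0 hz0 hxz, ← neg_one_pow_choose_two_mul M N]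
  ring

/-- `A_{u}[f]` over an arbitrary field and index type, with `h` in place of `η/2` and the monomials
in both determinants replaced by a family `p` of polynomials in the squared variable. -/
noncomputable def shiftDetRatio {ι : Type*} [Fintype ι] [DecidableEq ι] (h : F) (u : ι → F)
    (p : ι → F[X]) (f : F → F) : F :=
  (shiftMatrix h f u p).det / (evalMatrix (u ^ 2) p).det

lemma shiftDetRatio_comp_equiv {ι κ : Type*} [Fintype ι] [DecidableEq ι] [Fintype κ]
    [DecidableEq κ] (e : κ ≃ ι) (h : F) (u : ι → F) (p : ι → F[X]) (f : F → F) :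
    shiftDetRatio h (u ∘ e) (p ∘ e) f = shiftDetRatio h u p f :=
  congrArg₂ (· / ·) (det_submatrix_equiv_self e (shiftMatrix h f u p) :)
    (det_submatrix_equiv_self e (evalMatrix (u ^ 2) p) :)

theorem stmt12_general {L : ℕ} (hML : M ≤ L) {h : F} (a b : F) {x : Fin L → F} {z : Fin M → F}
    (hx : Function.Injective (x ^ 2)) (hz : Function.Injective (z ^ 2))
    (hx0 : ∀ i, x i ≠ 0) (hz0 : ∀ k, z k ≠ 0) (hxz : ∀ i k, ShiftSeparated h (x i) (z k)) :
    shiftDetRatio h x (fun j => X ^ (j : ℕ)) (dressedFactor h a b z) =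
      (-1) ^ M * 2 ^ (L - M) * (∏ j ∈ range (L - M), (a + b + j * (2 * h))) *
        shiftDetRatio h z (fun j => X ^ (j : ℕ)) (dressedFactor h (-a + h) (-b + h) x) := by
  obtain ⟨N, rfl⟩ := Nat.exists_eq_add_of_le hML
  have hx' : Function.Injective ((x ∘ finSumFinEquiv) ^ 2) := hx.comp finSumFinEquiv.injective
  have hVx := det_evalMatrix_X_pow_ne_zero finSumFinEquiv hx'
  have hVz := det_evalMatrix_X_pow_ne_zero (Equiv.refl (Fin M)) hz
  rw [← shiftDetRatio_comp_equiv finSumFinEquiv h x,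
    ← dressedFactor_comp_equiv finSumFinEquiv h _ _ x, shiftDetRatio, shiftDetRatio,
    Nat.add_sub_cancel_left, ← mul_div_assoc, mul_assoc ((-1) ^ M), ← prod_fin_two_mul_add]
  exact (div_eq_div_iff hVx hVz).2
    (det_shiftMatrix_duality a b hx' hz (fun i => hx0 _) hz0 fun i k => hxz _ k)

end Duality

lemma Afun_eq_shiftDetRatio {K : ℕ} (η : ℂ) (u : Fin K → ℂ) (f : ℂ → ℂ) :
    Afun η u f = shiftDetRatio (η / 2) u (fun j => X ^ (j : ℕ)) f := by
  simp only [Afun, shiftDetRatio, shiftMatrix, shiftSum, evalMatrix, eval_pow, eval_X, pow_mul,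
    Pi.pow_apply]

end ShiftDeterminants

theorem stmt12 (L M : ℕ) (hML : M ≤ L) (η ξp ξm : ℂ)
    (x : Fin L → ℂ) (z : Fin M → ℂ)
    (hx0 : ∀ i, x i ≠ 0) (hz0 : ∀ k, z k ≠ 0)
    (hx : ∀ i j, i ≠ j → x i ^ 2 ≠ x j ^ 2)
    (hz : ∀ i j, i ≠ j → z i ^ 2 ≠ z j ^ 2)
    (hxz : ∀ i k, (x i + η / 2) ^ 2 ≠ z k ^ 2 ∧ (x i - η / 2) ^ 2 ≠ z k ^ 2)
    (hzx : ∀ k i, (z k + η / 2) ^ 2 ≠ x i ^ 2 ∧ (z k - η / 2) ^ 2 ≠ x i ^ 2) :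
    Afun η x (fFun η ξp ξm z)
      = (-1 : ℂ) ^ M * 2 ^ (L - M) * (∏ j ∈ Finset.range (L - M), (ξp + ξm + (j : ℂ) * η))
          * Afun η z (fFun η (-ξp + η / 2) (-ξm + η / 2) x) := by
  have hmain := stmt12_general hML ξp ξm (h := η / 2) (fun i j => not_imp_not.1 (hx i j))
    (fun i j => not_imp_not.1 (hz i j)) hx0 hz0 hxz
  rwa [← Afun_eq_shiftDetRatio, ← Afun_eq_shiftDetRatio, mul_div_cancel₀ η two_ne_zero] at hmain
end

section
/- Let L ≥ M ≥ 0 be integers, η ∈ ℂ∖{0}, and let x_1,…,x_M, y_1,…,y_L ∈ ℂ be such that: the M+L squares x_1²,…,x_M²,y_1²,…,y_L² are pairwise distinct; (x_k+η/2)², k = 1,…,M, together with (x_k−η/2)², k = 1,…,M, are 2M pairwise distinct numbers; (y_i+εη/2)² ≠ (x_k+ε'η/2)² for all i,k and all signs ε, ε' ∈ {±1}; 2x_k + η ≠ 0 and (x_k−η)² ≠ x_m² for all k,m. Then for every function f : ℂ → ℂ one has A_{{x}∪{y}}[f] = S_{{x},{y}}[f]. -/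
open Finset

/-- `V̂(u_1,…,u_K) = ∏_{j<k}(u_k² − u_j²)`. -/
noncomputable def Vhat {K : ℕ} (u : Fin K → ℂ) : ℂ :=
  ∏ j, ∏ k ∈ Finset.Ioi j, (u k ^ 2 - u j ^ 2)

/-- `X(λ) = ∏_m (λ² − x_m²)`. -/
noncomputable def Xfun {M : ℕ} (x : Fin M → ℂ) (lam : ℂ) : ℂ :=
  ∏ m, (lam ^ 2 - x m ^ 2)

/-- `φ_{{x}}(λ) = ((2λ−η)/(2λ+η)) · X(λ+η)/X(λ−η)`. -/
noncomputable def phiFun (η : ℂ) {M : ℕ} (x : Fin M → ℂ) (lam : ℂ) : ℂ :=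
  ((2 * lam - η) / (2 * lam + η)) * (Xfun x (lam + η) / Xfun x (lam - η))

/-- The `L×L` Slavnov-type matrix `S_{x,y}[f]`. -/
noncomputable def Smat (η : ℂ) {M L : ℕ} (x : Fin M → ℂ) (y : Fin L → ℂ)
    (f : ℂ → ℂ) : Matrix (Fin L) (Fin L) ℂ :=
  Matrix.of fun i k : Fin L =>
    if hk : (k : ℕ) < M then
      f (y i) * Xfun x (y i + η)
          * (f (-x ⟨k, hk⟩) / ((y i + η / 2) ^ 2 - (x ⟨k, hk⟩ + η / 2) ^ 2)
             - f (x ⟨k, hk⟩) * phiFun η x (x ⟨k, hk⟩)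
                 / ((y i + η / 2) ^ 2 - (x ⟨k, hk⟩ - η / 2) ^ 2))
        + f (-y i) * Xfun x (y i - η)
          * (f (-x ⟨k, hk⟩) / ((y i - η / 2) ^ 2 - (x ⟨k, hk⟩ + η / 2) ^ 2)
             - f (x ⟨k, hk⟩) * phiFun η x (x ⟨k, hk⟩)
                 / ((y i - η / 2) ^ 2 - (x ⟨k, hk⟩ - η / 2) ^ 2))
    else
      f (y i) * Xfun x (y i + η) * (y i + η / 2) ^ (2 * ((k : ℕ) - M))
        + f (-y i) * Xfun x (y i - η) * (y i - η / 2) ^ (2 * ((k : ℕ) - M))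

/-- The scalar `S_{{x},{y}}[f]`. -/
noncomputable def Sval (η : ℂ) {M L : ℕ} (x : Fin M → ℂ) (y : Fin L → ℂ)
    (f : ℂ → ℂ) : ℂ :=
  (Vhat (fun k => x k - η / 2) / Vhat (fun k => x k + η / 2))
    * Matrix.det (Smat η x y f)
    / (Vhat (fun k => x (Fin.rev k)) * Vhat y)

/-!
The `j`-th entry of the row of `u` in the numerator of `A` is the value at the monomial `X ^ j` of
the functional `p ↦ f(u) p((u + η/2)²) + f(-u) p((u - η/2)²)`. Replace the monomials by the Lagrange
basis at the `2M` nodes `a_k = (x_k - η/2)²`, `b_k = (x_k + η/2)²`, completed by the multiples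
`Q X ^ j` of the nodal polynomial `Q`; the change of basis only costs the Vandermonde determinant of
the nodes. The row of `x_k` then has at most two nonzero entries, `f(-x_k)` and `f(x_k)`, in the
columns of `a_k` and `b_k`, and eliminating these rows leaves an `L × L` determinant. Since
`Q((u ± η/2)²) = X(u) X(u ± η)`, its entries are those of `S`, up to the factors `X(y_i)` and the
barycentric weights `1 / Q'(b_k)`: differentiating this factorization at `u = x_k` gives
`Q'(b_k) = φ(x_k) Q'(a_k)`, which is where `φ` comes from. The Vandermonde determinants and the
products `∏ Q'(b_k)`, `∏ X(y_i)` then combine into the prefactor of `S`.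
-/

namespace Slavnov

open Polynomial Matrix Lagrange

section BlockDeterminant

variable {R m n : Type*} [CommRing R] [Fintype m] [DecidableEq m] [Fintype n] [DecidableEq n]

theorem det_fromBlocks_fromCols_of_isRegular {A B : Matrix m m R} (hAB : Commute A B)
    (hA : IsRegular A.det) (C D : Matrix (m ⊕ n) m R) (F : Matrix (m ⊕ n) n R) :
    (fromBlocks A (fromCols B 0) C (fromCols D F)).det = (fromCols (D * A - C * B) F).det := by
  have hmul : fromBlocks A (fromCols B 0) C (fromCols D F)
        * fromBlocks 1 (fromCols (-B) 0) 0 (fromBlocks A 0 0 1)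
      = fromBlocks A 0 C (fromCols (D * A - C * B) F) := by
    rw [fromBlocks_multiply, mul_fromCols, mul_fromCols, fromCols_mul_fromBlocks,
      fromCols_mul_fromBlocks]
    congr 1
    · simp
    · ext i (j | j) <;> simp [hAB.eq]
    · simp
    · ext i (j | j) <;> simp [sub_eq_neg_add]
  have hdet := congrArg det hmul
  rw [det_mul, det_fromBlocks_zero₂₁, det_fromBlocks_zero₂₁, det_fromBlocks_zero₁₂, det_one,
    det_one, one_mul, mul_one, mul_comm] at hdet
  exact hA.left hdet

theorem det_fromBlocks_fromCols_of_commute {A B : Matrix m m R} (hAB : Commute A B)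
    (C D : Matrix (m ⊕ n) m R) (F : Matrix (m ⊕ n) n R) :
    (fromBlocks A (fromCols B 0) C (fromCols D F)).det = (fromCols (D * A - C * B) F).det := by
  -- Over `R[X]` the matrix `X + A` has monic, hence regular, determinant; then set `X = 0`.
  let A' : Matrix m m R[X] := (X : R[X]) • (1 : Matrix m m R[X]) + A.map Polynomial.C
  have hA' : IsRegular A'.det := Monic.isRegular (leadingCoeff_det_X_one_add_C A)
  have hcomm : Commute A' (B.map Polynomial.C) := by
    refine ((Commute.one_left _).smul_left _).add_left ?_
    rw [Commute, SemiconjBy, ← Matrix.map_mul, ← Matrix.map_mul, hAB.eq]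
  have h := congrArg (evalRingHom (0 : R)) (det_fromBlocks_fromCols_of_isRegular hcomm hA'
    (C.map Polynomial.C) (D.map Polynomial.C) (F.map Polynomial.C))
  rw [RingHom.map_det, RingHom.map_det] at h
  have hA0 (i j : m) : (A' i j).eval 0 = A i j := by
    by_cases hij : i = j <;> simp [A', hij]
  convert h using 2
  · ext (i | i) (j | j | j) <;> simp [hA0]
  · ext i (j | j)
    · simp [Matrix.mul_apply, eval_finsetSum, hA0]
    · simp

end BlockDeterminant

section Vandermonde

variable {R : Type*} [CommRing R]

theorem det_vandermonde_append {m n : ℕ} (u : Fin m → R) (v : Fin n → R) :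
    (vandermonde (Fin.append u v)).det
      = (vandermonde u).det * ((∏ i, (nodal univ u).eval (v i)) * (vandermonde v).det) := by
  nontriviality R
  let p : Fin (m + n) → R[X] :=
    Fin.append (fun j => X ^ (j : ℕ)) (fun j => nodal univ u * X ^ (j : ℕ))
  have hmonic (j) : (p j).Monic := by
    refine Fin.addCases (fun j => ?_) (fun j => ?_) j
    · simp [p, monic_X_pow]
    · simpa [p] using nodal_monic.mul (monic_X_pow _)
  have hdeg (j) : (p j).natDegree = j := by
    refine Fin.addCases (fun j => ?_) (fun j => ?_) j
    · simp [p]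
    · simp [p, nodal_monic.natDegree_mul (monic_X_pow _)]
  have hblocks : (of fun i j => (p j).eval (Fin.append u v i)).submatrix
        finSumFinEquiv finSumFinEquiv
      = fromBlocks (vandermonde u) 0 (of fun i j => v i ^ (j : ℕ))
          (diagonal (fun i => (nodal univ u).eval (v i)) * vandermonde v) := by
    ext (i | i) (j | j) <;> simp [p, vandermonde_apply, eval_nodal_at_node]
  rw [det_eval_matrixOfPolynomials_eq_det_vandermonde _ p hdeg hmonic,
    ← det_submatrix_equiv_self finSumFinEquiv, hblocks, det_fromBlocks_zero₁₂, det_mul,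
    det_diagonal]

theorem det_vandermonde_comp_rev {n : ℕ} (v : Fin n → R) :
    (vandermonde (v ∘ Fin.rev)).det = ∏ i, ∏ j ∈ Ioi i, (v i - v j) := by
  rw [det_vandermonde, prod_sigma', prod_sigma']
  refine prod_nbij' (fun p => ⟨p.2.rev, p.1.rev⟩) (fun p => ⟨p.2.rev, p.1.rev⟩) ?_ ?_ ?_ ?_ ?_
    <;> simp

theorem prod_eval_derivative_nodal {n : ℕ} (v : Fin n → R) :
    ∏ k, (derivative (nodal univ v)).eval (v k)
      = (vandermonde v).det * (vandermonde (v ∘ Fin.rev)).det := by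
  rw [det_vandermonde, det_vandermonde_comp_rev]
  simp_rw [← prod_mul_distrib]
  rw [prod_prod_Ioi_mul_eq_prod_prod_off_diag (fun j i => v j - v i), prod_comm' (by simp [eq_comm])
    (t' := univ) (s' := fun i => {i}ᶜ)]
  simp_rw [eval_nodal_derivative_eval_node_eq (mem_univ _), eval_nodal, ← sdiff_singleton_eq_erase,
    compl_eq_univ_sdiff]

theorem nodal_append {m n : ℕ} (u : Fin m → R) (v : Fin n → R) :
    nodal univ (Fin.append u v) = nodal univ u * nodal univ v := by
  simp [nodal, Fin.prod_univ_add]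

theorem det_vandermonde_append_mul_det_vandermonde_comp_rev {m n : ℕ}
    (u : Fin m → R) (v : Fin n → R) :
    (vandermonde (Fin.append u v)).det * (vandermonde (v ∘ Fin.rev)).det
      = (vandermonde u).det * ∏ k, (derivative (nodal univ (Fin.append u v))).eval (v k) := by
  have h (k : Fin n) : (derivative (nodal univ (Fin.append u v))).eval (v k)
      = (nodal univ u).eval (v k) * (derivative (nodal univ v)).eval (v k) := by
    simp [nodal_append, derivative_mul, eval_nodal_at_node]
  simp_rw [h, prod_mul_distrib, prod_eval_derivative_nodal, det_vandermonde_append]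
  ring

theorem eval_derivative_nodal_mul_nodalWeight {F : Type*} [Field F] {n : ℕ} {c : Fin n → F}
    (hc : Function.Injective c) (i : Fin n) :
    (derivative (nodal univ c)).eval (c i) * nodalWeight univ c i = 1 := by
  have hw := nodalWeight_ne_zero hc.injOn (mem_univ i)
  rw [nodalWeight_eq_eval_derivative_nodal (mem_univ i)] at hw ⊢
  exact mul_inv_cancel₀ (inv_eq_zero.not.mp hw)

end Vandermonde

section Alternant

variable {R : Type*} [CommRing R]

theorem det_alternant_eq_mul_det_coeff {ι : Type*} [Fintype ι] [DecidableEq ι] {n : ℕ}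
    (e : ι ≃ Fin n) (ℓ : ι → R[X] →ₗ[R] R) (p : ι → R[X]) (hp : ∀ j, (p j).natDegree < n) :
    (of fun i j => ℓ i (p j)).det
      = (of fun i j => ℓ i (X ^ (e j : ℕ))).det * (of fun i j => (p j).coeff (e i)).det := by
  rw [← det_mul]
  congr 1
  ext i j
  simp only [mul_apply, of_apply]
  conv_lhs => rw [(p j).as_sum_range_C_mul_X_pow' (hp j), ← Fin.sum_univ_eq_sum_range
    (fun k => Polynomial.C ((p j).coeff k) * X ^ k), map_sum]
  rw [← e.sum_comp]
  refine sum_congr rfl fun k _ => ?_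
  rw [← smul_eq_C_mul, map_smul, smul_eq_mul, mul_comm]

theorem det_coeff_sumElim_monic_mul_X_pow {m n : ℕ} (q : Fin m → R[X])
    (hq : ∀ j, (q j).natDegree < m) {Q : R[X]} (hQ : Q.Monic) (hdeg : Q.natDegree = m) :
    (of fun i j : Fin m ⊕ Fin n => (Sum.elim q (fun j : Fin n => Q * X ^ (j : ℕ)) j).coeff
        (finSumFinEquiv i : Fin (m + n))).det
      = (of fun i j : Fin m => (q j).coeff i).det := by
  let T : Matrix (Fin n) (Fin n) R := of fun i j => (Q * X ^ (j : ℕ)).coeff (m + i)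
  have hT : T.det = 1 := by
    rw [det_of_isUpperTriangular]
    · refine prod_eq_one fun i _ => ?_
      simpa [T, ← hdeg] using hQ.leadingCoeff
    · intro i j hij
      have : (j : ℕ) < i := hij
      simp only [T, of_apply, coeff_mul_X_pow', ← hdeg]
      rw [if_pos (by lia), coeff_eq_zero_of_natDegree_lt (by lia)]
  have hblocks : (of fun i j : Fin m ⊕ Fin n =>
        (Sum.elim q (fun j : Fin n => Q * X ^ (j : ℕ)) j).coeff (finSumFinEquiv i : Fin (m + n)))
      = fromBlocks (of fun i j : Fin m => (q j).coeff i)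
          (of fun (i : Fin m) (j : Fin n) => (Q * X ^ (j : ℕ)).coeff i) 0 T := by
    ext (i | i) (j | j)
    · simp
    · simp
    · simpa using coeff_eq_zero_of_natDegree_lt ((hq j).trans_le (Nat.le_add_right m i))
    · simp [T]
  rw [hblocks, det_fromBlocks_zero₂₁, hT, mul_one]

variable {F : Type*} [Field F]

theorem natDegree_lagrangeBasis_lt {m : ℕ} {c : Fin m → F} (hc : Function.Injective c)
    (k : Fin m) : (Lagrange.basis univ c k).natDegree < m := by
  have h := degree_basis hc.injOn (mem_univ k)
  rw [natDegree_eq_of_degree_eq_some h, card_univ, Fintype.card_fin]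
  exact Nat.sub_lt k.pos one_pos

theorem det_vandermonde_mul_det_coeff_lagrangeBasis {m : ℕ} {c : Fin m → F}
    (hc : Function.Injective c) :
    (vandermonde c).det * (of fun i j : Fin m => (Lagrange.basis univ c j).coeff i).det = 1 := by
  have h := det_alternant_eq_mul_det_coeff (Equiv.refl _) (fun i => leval (c i))
    (Lagrange.basis univ c) (natDegree_lagrangeBasis_lt hc)
  have hone : (of fun i j => leval (c i) (Lagrange.basis univ c j)) = 1 := by
    ext i j
    by_cases hij : i = j
    · simp [hij, eval_basis_self hc.injOn, one_apply]
    · simp [hij, eval_basis_of_ne (Ne.symm hij)]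
  rw [hone, det_one] at h
  simpa [vandermonde] using h.symm

/-- The Lagrange basis at the nodes `c` followed by the multiples `Q`, `Q X`, …, `Q X ^ (n - 1)` of
the nodal polynomial `Q` of `c`: a basis of the polynomials of degree less than `m + n`. -/
noncomputable def lagrangeExtension {m : ℕ} (n : ℕ) (c : Fin m → F) : Fin m ⊕ Fin n → F[X] :=
  Sum.elim (Lagrange.basis univ c) fun j : Fin n => nodal univ c * X ^ (j : ℕ)

theorem eval_lagrangeExtension {m n : ℕ} {c : Fin m → F} (hc : Function.Injective c) (i : Fin m)
    (j : Fin m ⊕ Fin n) :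
    (lagrangeExtension n c j).eval (c i) = if j = .inl i then 1 else 0 := by
  rcases j with j | j
  · by_cases hij : j = i
    · simp [lagrangeExtension, hij, eval_basis_self hc.injOn]
    · simp [lagrangeExtension, hij, eval_basis_of_ne hij]
  · simp [lagrangeExtension, eval_nodal_at_node]

theorem det_alternant_eq_det_vandermonde_mul {ι : Type*} [Fintype ι] [DecidableEq ι] {m n : ℕ}
    (e : ι ≃ Fin m ⊕ Fin n) {c : Fin m → F} (hc : Function.Injective c) (ℓ : ι → F[X] →ₗ[F] F) :
    (of fun i j => ℓ i (X ^ (finSumFinEquiv (e j) : ℕ))).det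
      = (vandermonde c).det * (of fun i j => ℓ i (lagrangeExtension n c (e j))).det := by
  have hdeg (j : ι) : (lagrangeExtension n c (e j)).natDegree < m + n := by
    rcases e j with k | k
    · exact (natDegree_lagrangeBasis_lt hc k).trans_le (Nat.le_add_right _ _)
    · simp [lagrangeExtension, nodal_monic.natDegree_mul (monic_X_pow _)]
  have hcoeff : (of fun i j => (lagrangeExtension n c (e j)).coeff (finSumFinEquiv (e i))).det
      = (of fun i j : Fin m => (Lagrange.basis univ c j).coeff i).det := by
    rw [← det_coeff_sumElim_monic_mul_X_pow (n := n) _ (natDegree_lagrangeBasis_lt hc) nodal_monic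
      (by simp : (nodal univ c).natDegree = m), ← det_submatrix_equiv_self e]
    rfl
  rw [det_alternant_eq_mul_det_coeff (e.trans finSumFinEquiv) ℓ _ hdeg]
  simp only [Equiv.trans_apply]
  rw [hcoeff, mul_left_comm, det_vandermonde_mul_det_coeff_lagrangeBasis hc, mul_one]

end Alternant

section Vhat

theorem Vhat_eq_det_vandermonde {K : ℕ} (u : Fin K → ℂ) :
    Vhat u = (vandermonde fun k => u k ^ 2).det :=
  (det_vandermonde _).symm

theorem Vhat_ne_zero_iff {K : ℕ} {u : Fin K → ℂ} :
    Vhat u ≠ 0 ↔ Function.Injective fun k => u k ^ 2 := by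
  rw [Vhat_eq_det_vandermonde, det_vandermonde_ne_zero_iff]

theorem Vhat_append {m n : ℕ} (u : Fin m → ℂ) (v : Fin n → ℂ) :
    Vhat (Fin.append u v) = Vhat u * ((∏ i, Xfun u (v i)) * Vhat v) := by
  have happend : (fun k => Fin.append u v k ^ 2)
      = Fin.append (fun k => u k ^ 2) fun k => v k ^ 2 :=
    funext (Fin.addCases (by simp) (by simp))
  simp_rw [Vhat_eq_det_vandermonde, happend, det_vandermonde_append, eval_nodal, Xfun]

theorem Vhat_comp_rev {K : ℕ} (u : Fin K → ℂ) :
    Vhat (fun k => u k.rev) = Equiv.Perm.sign (Fin.revPerm : Equiv.Perm (Fin K)) * Vhat u := by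
  simp_rw [Vhat_eq_det_vandermonde]
  exact det_permute Fin.revPerm (vandermonde fun k => u k ^ 2)

theorem Vhat_comp_rev_ne_zero {K : ℕ} {u : Fin K → ℂ} (hu : Vhat u ≠ 0) :
    Vhat (fun k => u k.rev) ≠ 0 := by
  rw [Vhat_comp_rev]
  exact mul_ne_zero (Int.cast_ne_zero.mpr (Units.ne_zero _)) hu

theorem Vhat_comp_rev_mul {K : ℕ} (u v : Fin K → ℂ) :
    Vhat (fun k => u k.rev) * Vhat v = Vhat u * Vhat fun k => v k.rev := by
  rw [Vhat_comp_rev, Vhat_comp_rev, mul_assoc, mul_left_comm]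

theorem det_pow_two_mul_eq_Vhat {K : ℕ} (u : Fin K → ℂ) :
    (of fun i j : Fin K => u i ^ (2 * (j : ℕ))).det = Vhat u := by
  simp_rw [Vhat_eq_det_vandermonde, pow_mul]
  rfl

end Vhat

section ShiftedNodes

variable {M : ℕ} (η : ℂ) (x : Fin M → ℂ)

/-- The `2M` interpolation nodes `(x_k - η/2)²`, followed by `(x_k + η/2)²`. -/
noncomputable def shiftedNodes : Fin (M + M) → ℂ :=
  Fin.append (fun k => (x k - η / 2) ^ 2) (fun k => (x k + η / 2) ^ 2)

theorem shiftedNodes_castAdd (k : Fin M) :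
    shiftedNodes η x (Fin.castAdd M k) = (x k - η / 2) ^ 2 :=
  Fin.append_left _ _ k

theorem shiftedNodes_natAdd (k : Fin M) :
    shiftedNodes η x (Fin.natAdd M k) = (x k + η / 2) ^ 2 :=
  Fin.append_right _ _ k

theorem forall_ne_shiftedNodes_iff {t : ℂ} :
    (∀ j, t ≠ shiftedNodes η x j) ↔ ∀ k, t ≠ (x k - η / 2) ^ 2 ∧ t ≠ (x k + η / 2) ^ 2 := by
  refine ⟨fun h k => ⟨?_, ?_⟩, fun h => Fin.addCases (fun k => ?_) (fun k => ?_)⟩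
  · exact shiftedNodes_castAdd η x k ▸ h _
  · exact shiftedNodes_natAdd η x k ▸ h _
  · exact (shiftedNodes_castAdd η x k).symm ▸ (h k).1
  · exact (shiftedNodes_natAdd η x k).symm ▸ (h k).2

theorem shiftedNodes_injective_iff :
    Function.Injective (shiftedNodes η x) ↔ Function.Injective
      (Fin.append (fun k => (x k + η / 2) ^ 2) (fun k => (x k - η / 2) ^ 2)) := by
  simp only [shiftedNodes, Fin.append_injective_iff]
  exact ⟨fun h => ⟨h.2.1, h.1, fun i j => (h.2.2 j i).symm⟩,
    fun h => ⟨h.2.1, h.1, fun i j => (h.2.2 j i).symm⟩⟩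

/-- The function `Xfun x` as a polynomial, so that it can be differentiated formally. -/
noncomputable def Xpoly : ℂ[X] :=
  (nodal univ fun m => x m ^ 2).comp (X ^ 2)

theorem eval_Xpoly (t : ℂ) : (Xpoly x).eval t = Xfun x t := by
  simp [Xpoly, eval_nodal, Xfun]

theorem eval_nodal_shiftedNodes_add (t : ℂ) :
    (nodal univ (shiftedNodes η x)).eval ((t + η / 2) ^ 2) = Xfun x t * Xfun x (t + η) := by
  simp_rw [shiftedNodes, nodal_append, eval_mul, eval_nodal, Xfun, ← prod_mul_distrib]
  exact prod_congr rfl fun m _ => by ring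

theorem nodal_shiftedNodes_neg :
    nodal univ (shiftedNodes (-η) x) = nodal univ (shiftedNodes η x) := by
  simp_rw [shiftedNodes, nodal_append, neg_div, sub_neg_eq_add, ← sub_eq_add_neg]
  exact mul_comm _ _

theorem eval_nodal_shiftedNodes_sub (t : ℂ) :
    (nodal univ (shiftedNodes η x)).eval ((t - η / 2) ^ 2) = Xfun x t * Xfun x (t - η) := by
  simpa only [nodal_shiftedNodes_neg, neg_div, ← sub_eq_add_neg] using
    eval_nodal_shiftedNodes_add (-η) x t

theorem eval_derivative_nodal_shiftedNodes_add (k : Fin M) :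
    (2 * x k + η) * (derivative (nodal univ (shiftedNodes η x))).eval ((x k + η / 2) ^ 2)
      = (derivative (Xpoly x)).eval (x k) * Xfun x (x k + η) := by
  have hcomp : (nodal univ (shiftedNodes η x)).comp ((X + C (η / 2)) ^ 2)
      = Xpoly x * (Xpoly x).comp (X + C η) :=
    Polynomial.funext fun t => by simp [eval_Xpoly, eval_nodal_shiftedNodes_add]
  have hzero : Xfun x (x k) = 0 := prod_eq_zero (mem_univ k) (sub_self _)
  have h := congrArg (fun p => (derivative p).eval (x k)) hcomp
  simp only [derivative_comp, derivative_pow, derivative_add, derivative_X, derivative_C, add_zero,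
    Nat.cast_ofNat, Nat.add_one_sub_one, pow_one, mul_one, one_mul, derivative_mul, eval_add,
    eval_mul, eval_pow, eval_comp, eval_X, eval_C, eval_Xpoly, hzero, zero_mul] at h
  linear_combination h

theorem eval_derivative_nodal_shiftedNodes_sub (k : Fin M) :
    (2 * x k - η) * (derivative (nodal univ (shiftedNodes η x))).eval ((x k - η / 2) ^ 2)
      = (derivative (Xpoly x)).eval (x k) * Xfun x (x k - η) := by
  simpa only [nodal_shiftedNodes_neg, neg_div, ← sub_eq_add_neg] using
    eval_derivative_nodal_shiftedNodes_add (-η) x k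

theorem eval_derivative_nodal_shiftedNodes_eq_phiFun_mul {k : Fin M} (hk : 2 * x k + η ≠ 0)
    (hX : Xfun x (x k - η) ≠ 0) :
    (derivative (nodal univ (shiftedNodes η x))).eval ((x k + η / 2) ^ 2)
      = phiFun η x (x k)
        * (derivative (nodal univ (shiftedNodes η x))).eval ((x k - η / 2) ^ 2) := by
  have hadd := eval_derivative_nodal_shiftedNodes_add η x k
  have hsub := eval_derivative_nodal_shiftedNodes_sub η x k
  rw [phiFun, div_mul_div_comm, div_mul_eq_mul_div, eq_div_iff (mul_ne_zero hk hX)]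
  linear_combination Xfun x (x k - η) * hadd - Xfun x (x k + η) * hsub

theorem nodalWeight_shiftedNodes_castAdd (hc : Function.Injective (shiftedNodes η x)) {k : Fin M}
    (hk : 2 * x k + η ≠ 0) (hX : Xfun x (x k - η) ≠ 0) :
    nodalWeight univ (shiftedNodes η x) (Fin.castAdd M k)
      = phiFun η x (x k) * nodalWeight univ (shiftedNodes η x) (Fin.natAdd M k) := by
  have ha := eval_derivative_nodal_mul_nodalWeight hc (Fin.castAdd M k)
  have hb := eval_derivative_nodal_mul_nodalWeight hc (Fin.natAdd M k)
  rw [shiftedNodes_castAdd] at ha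
  rw [shiftedNodes_natAdd, eval_derivative_nodal_shiftedNodes_eq_phiFun_mul η x hk hX] at hb
  linear_combination phiFun η x (x k) * nodalWeight univ (shiftedNodes η x) (Fin.natAdd M k) * ha
    - nodalWeight univ (shiftedNodes η x) (Fin.castAdd M k) * hb

theorem det_vandermonde_shiftedNodes_mul_prod_nodalWeight_mul_Vhat
    (hc : Function.Injective (shiftedNodes η x)) :
    (vandermonde (shiftedNodes η x)).det
        * (∏ k, nodalWeight univ (shiftedNodes η x) (Fin.natAdd M k))
        * Vhat (fun k => x k.rev + η / 2)
      = Vhat fun k => x k - η / 2 := by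
  have hV : (vandermonde (shiftedNodes η x)).det * Vhat (fun k => x k.rev + η / 2)
      = Vhat (fun k => x k - η / 2)
        * ∏ k, (derivative (nodal univ (shiftedNodes η x))).eval ((x k + η / 2) ^ 2) := by
    simp_rw [Vhat_eq_det_vandermonde]
    exact det_vandermonde_append_mul_det_vandermonde_comp_rev _ fun k => (x k + η / 2) ^ 2
  have hweight : (∏ k, (derivative (nodal univ (shiftedNodes η x))).eval ((x k + η / 2) ^ 2))
      * ∏ k, nodalWeight univ (shiftedNodes η x) (Fin.natAdd M k) = 1 := by
    rw [← prod_mul_distrib]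
    refine prod_eq_one fun k _ => ?_
    rw [← shiftedNodes_natAdd, eval_derivative_nodal_mul_nodalWeight hc]
  rw [mul_right_comm, hV, mul_assoc, hweight, mul_one]

end ShiftedNodes

section ShiftEval

variable (η : ℂ) (f : ℂ → ℂ)

/-- The functional `p ↦ f(u) p((u + η/2)²) + f(-u) p((u - η/2)²)`. Its values on the monomials are
the entries of the numerator of `Afun`. -/
noncomputable def shiftEval (u : ℂ) : ℂ[X] →ₗ[ℂ] ℂ :=
  f u • leval ((u + η / 2) ^ 2) + f (-u) • leval ((u - η / 2) ^ 2)

theorem shiftEval_apply (u : ℂ) (p : ℂ[X]) :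
    shiftEval η f u p = f u * p.eval ((u + η / 2) ^ 2) + f (-u) * p.eval ((u - η / 2) ^ 2) :=
  rfl

/-- The matrix of the values of the functionals `shiftEval η f (u i)` at the polynomials `p j`. -/
noncomputable def shiftEvalMatrix {ι κ : Type*} (u : ι → ℂ) (p : κ → ℂ[X]) : Matrix ι κ ℂ :=
  of fun i j => shiftEval η f (u i) (p j)

theorem Afun_eq_det_shiftEvalMatrix_div_Vhat {K : ℕ} (u : Fin K → ℂ) :
    Afun η u f = (shiftEvalMatrix η f u fun j : Fin K => X ^ (j : ℕ)).det / Vhat u := by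
  rw [Afun, det_pow_two_mul_eq_Vhat]
  simp only [shiftEvalMatrix, shiftEval_apply, eval_pow, eval_X, pow_mul]

variable {M : ℕ} (x : Fin M → ℂ)

theorem shiftEval_nodal_mul_X_pow (u : ℂ) (j : ℕ) :
    shiftEval η f u (nodal univ (shiftedNodes η x) * X ^ j)
      = Xfun x u * (f u * Xfun x (u + η) * (u + η / 2) ^ (2 * j)
        + f (-u) * Xfun x (u - η) * (u - η / 2) ^ (2 * j)) := by
  simp only [shiftEval_apply, eval_mul, eval_pow, eval_X, eval_nodal_shiftedNodes_add,
    eval_nodal_shiftedNodes_sub, pow_mul]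
  ring

theorem shiftEval_basis {u : ℂ} {j : Fin (M + M)} (hadd : (u + η / 2) ^ 2 ≠ shiftedNodes η x j)
    (hsub : (u - η / 2) ^ 2 ≠ shiftedNodes η x j) :
    shiftEval η f u (Lagrange.basis univ (shiftedNodes η x) j)
      = nodalWeight univ (shiftedNodes η x) j * Xfun x u
        * (f u * Xfun x (u + η) / ((u + η / 2) ^ 2 - shiftedNodes η x j)
          + f (-u) * Xfun x (u - η) / ((u - η / 2) ^ 2 - shiftedNodes η x j)) := by
  rw [shiftEval_apply, eval_basis_not_at_node (mem_univ j) hadd,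
    eval_basis_not_at_node (mem_univ j) hsub, eval_nodal_shiftedNodes_add,
    eval_nodal_shiftedNodes_sub]
  ring

end ShiftEval

section SlavnovMatrix

variable {M N : ℕ} (η : ℂ) (f : ℂ → ℂ) (x : Fin M → ℂ) (y : Fin (M + N) → ℂ)

theorem shiftEval_nodal_mul_X_pow_eq_Smat (i : Fin (M + N)) (j : Fin N) :
    shiftEval η f (y i) (nodal univ (shiftedNodes η x) * X ^ (j : ℕ))
      = Xfun x (y i) * Smat η x y f i (Fin.natAdd M j) := by
  simp [shiftEval_nodal_mul_X_pow, Smat]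

theorem shiftEval_basis_sub_eq_Smat (hc : Function.Injective (shiftedNodes η x))
    {i : Fin (M + N)} {k : Fin M}
    (hadd : ∀ j, (y i + η / 2) ^ 2 ≠ shiftedNodes η x j)
    (hsub : ∀ j, (y i - η / 2) ^ 2 ≠ shiftedNodes η x j)
    (hk : 2 * x k + η ≠ 0) (hX : Xfun x (x k - η) ≠ 0) :
    shiftEval η f (y i) (Lagrange.basis univ (shiftedNodes η x) (Fin.natAdd M k)) * f (-x k)
        - shiftEval η f (y i) (Lagrange.basis univ (shiftedNodes η x) (Fin.castAdd M k)) * f (x k)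
      = Xfun x (y i) * Smat η x y f i (Fin.castAdd N k)
        * nodalWeight univ (shiftedNodes η x) (Fin.natAdd M k) := by
  rw [shiftEval_basis η f x (hadd _) (hsub _), shiftEval_basis η f x (hadd _) (hsub _),
    nodalWeight_shiftedNodes_castAdd η x hc hk hX]
  simp only [shiftedNodes_castAdd, shiftedNodes_natAdd, Smat, of_apply, Fin.val_castAdd, k.is_lt,
    dif_pos, Fin.eta]
  ring

theorem shiftEval_lagrangeExtension_node {k : Fin M} {j : Fin (M + M) ⊕ Fin N}
    (hc : Function.Injective (shiftedNodes η x)) :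
    shiftEval η f (x k) (lagrangeExtension N (shiftedNodes η x) j)
      = (if j = .inl (Fin.natAdd M k) then f (x k) else 0)
        + if j = .inl (Fin.castAdd M k) then f (-x k) else 0 := by
  rw [shiftEval_apply, ← shiftedNodes_natAdd, ← shiftedNodes_castAdd,
    eval_lagrangeExtension hc, eval_lagrangeExtension hc, mul_ite, mul_ite]
  simp only [mul_one, mul_zero]

/-- Splits the index `Fin (M + M)` of the nodes into the two shifts, so that it can be matched with
the index `Fin M ⊕ (Fin M ⊕ Fin N)` of the points `x`, `y`. -/
def nodeEquiv (M N : ℕ) : Fin M ⊕ (Fin M ⊕ Fin N) ≃ Fin (M + M) ⊕ Fin N :=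
  (Equiv.sumAssoc _ _ _).symm.trans (Equiv.sumCongr finSumFinEquiv (Equiv.refl _))

theorem shiftEvalMatrix_sumElim_lagrangeExtension (hc : Function.Injective (shiftedNodes η x)) :
    shiftEvalMatrix η f (Sum.elim x (y ∘ finSumFinEquiv))
        (lagrangeExtension N (shiftedNodes η x) ∘ nodeEquiv M N)
      = fromBlocks (diagonal fun k => f (-x k)) (fromCols (diagonal fun k => f (x k)) 0)
          (shiftEvalMatrix η f (y ∘ finSumFinEquiv)
            (Lagrange.basis univ (shiftedNodes η x) ∘ Fin.castAdd M))
          (fromCols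
            (shiftEvalMatrix η f (y ∘ finSumFinEquiv)
              (Lagrange.basis univ (shiftedNodes η x) ∘ Fin.natAdd M))
            (shiftEvalMatrix η f (y ∘ finSumFinEquiv)
              fun j : Fin N => nodal univ (shiftedNodes η x) * X ^ (j : ℕ))) := by
  have hne (j k : Fin M) : Fin.castAdd M j ≠ k.addNat M := by
    simp only [ne_eq, Fin.ext_iff, Fin.val_castAdd, Fin.val_addNat]
    lia
  ext (k | i) (j | j | j)
  · simp [shiftEvalMatrix, shiftEval_lagrangeExtension_node η f x hc, nodeEquiv, diagonal_apply,
      hne, eq_comm (a := j)]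
  · simp [shiftEvalMatrix, shiftEval_lagrangeExtension_node η f x hc, nodeEquiv, diagonal_apply,
      (hne _ _).symm, eq_comm (a := j)]
  · simp [shiftEvalMatrix, shiftEval_lagrangeExtension_node η f x hc, nodeEquiv]
  all_goals rfl

theorem fromCols_shiftEvalMatrix_eq_Smat (hc : Function.Injective (shiftedNodes η x))
    (hadd : ∀ i j, (y i + η / 2) ^ 2 ≠ shiftedNodes η x j)
    (hsub : ∀ i j, (y i - η / 2) ^ 2 ≠ shiftedNodes η x j)
    (hx : ∀ k, 2 * x k + η ≠ 0) (hX : ∀ k, Xfun x (x k - η) ≠ 0) :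
    fromCols
        (shiftEvalMatrix η f (y ∘ finSumFinEquiv)
            (Lagrange.basis univ (shiftedNodes η x) ∘ Fin.natAdd M) * (diagonal fun k => f (-x k))
          - shiftEvalMatrix η f (y ∘ finSumFinEquiv)
            (Lagrange.basis univ (shiftedNodes η x) ∘ Fin.castAdd M) * diagonal fun k => f (x k))
        (shiftEvalMatrix η f (y ∘ finSumFinEquiv)
          fun j : Fin N => nodal univ (shiftedNodes η x) * X ^ (j : ℕ))
      = diagonal (Xfun x ∘ y ∘ finSumFinEquiv)
        * (Smat η x y f).submatrix finSumFinEquiv finSumFinEquiv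
        * diagonal (Sum.elim (nodalWeight univ (shiftedNodes η x) ∘ Fin.natAdd M) 1) := by
  ext i (k | j)
  · simpa [shiftEvalMatrix, mul_diagonal, diagonal_mul, -Fin.natAdd_eq_addNat] using
      shiftEval_basis_sub_eq_Smat η f x y hc (hadd _) (hsub _) (hx k) (hX k)
  · simpa [shiftEvalMatrix, mul_diagonal, diagonal_mul] using
      shiftEval_nodal_mul_X_pow_eq_Smat η f x y (finSumFinEquiv i) j

theorem det_shiftEvalMatrix_lagrangeExtension (hc : Function.Injective (shiftedNodes η x))
    (hadd : ∀ i j, (y i + η / 2) ^ 2 ≠ shiftedNodes η x j)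
    (hsub : ∀ i j, (y i - η / 2) ^ 2 ≠ shiftedNodes η x j)
    (hx : ∀ k, 2 * x k + η ≠ 0) (hX : ∀ k, Xfun x (x k - η) ≠ 0) :
    (shiftEvalMatrix η f (Sum.elim x (y ∘ finSumFinEquiv))
        (lagrangeExtension N (shiftedNodes η x) ∘ nodeEquiv M N)).det
      = (∏ i, Xfun x (y i)) * (Smat η x y f).det
        * ∏ k, nodalWeight univ (shiftedNodes η x) (Fin.natAdd M k) := by
  have hcomm : Commute (diagonal fun k => f (-x k)) (diagonal fun k => f (x k)) :=
    commute_diagonal _ _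
  have hprod := finSumFinEquiv.prod_comp fun i : Fin (M + N) => Xfun x (y i)
  rw [shiftEvalMatrix_sumElim_lagrangeExtension η f x y hc,
    det_fromBlocks_fromCols_of_commute hcomm,
    fromCols_shiftEvalMatrix_eq_Smat η f x y hc hadd hsub hx hX, det_mul,
    det_mul, det_diagonal, det_diagonal, det_submatrix_equiv_self, Fintype.prod_sumElim]
  simp only [← hprod, Function.comp_apply, Pi.one_apply, prod_const_one, mul_one]

theorem det_shiftEvalMatrix_append_X_pow :
    (shiftEvalMatrix η f (Fin.append x y) fun j : Fin (M + (M + N)) => X ^ (j : ℕ)).det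
      = (shiftEvalMatrix η f (Sum.elim x (y ∘ finSumFinEquiv))
          fun j => X ^ (finSumFinEquiv (nodeEquiv M N j) : ℕ)).det := by
  let e : Fin M ⊕ (Fin M ⊕ Fin N) ≃ Fin (M + (M + N)) :=
    ((Equiv.refl _).sumCongr finSumFinEquiv).trans finSumFinEquiv
  have hrow (i) : Fin.append x y (e i) = Sum.elim x (y ∘ finSumFinEquiv) i := by
    rcases i with i | i <;> simp [e]
  have hcol (j) : (e j : ℕ) = finSumFinEquiv (nodeEquiv M N j) := by
    rcases j with j | j | j <;> simp [e, nodeEquiv] <;> lia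
  rw [← det_submatrix_equiv_self e]
  simp only [shiftEvalMatrix, submatrix, of_apply, hrow, hcol]

theorem det_shiftEvalMatrix_append_X_pow_mul_Vhat (hc : Function.Injective (shiftedNodes η x))
    (hadd : ∀ i j, (y i + η / 2) ^ 2 ≠ shiftedNodes η x j)
    (hsub : ∀ i j, (y i - η / 2) ^ 2 ≠ shiftedNodes η x j)
    (hx : ∀ k, 2 * x k + η ≠ 0) (hX : ∀ k, Xfun x (x k - η) ≠ 0) :
    (shiftEvalMatrix η f (Fin.append x y) fun j : Fin (M + (M + N)) => X ^ (j : ℕ)).det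
        * (Vhat (fun k => x k.rev) * Vhat fun k => x k + η / 2)
      = Vhat x * Vhat (fun k => x k - η / 2) * ((∏ i, Xfun x (y i)) * (Smat η x y f).det) := by
  have hbasis : (shiftEvalMatrix η f (Fin.append x y)
        fun j : Fin (M + (M + N)) => X ^ (j : ℕ)).det
      = (vandermonde (shiftedNodes η x)).det
        * (shiftEvalMatrix η f (Sum.elim x (y ∘ finSumFinEquiv))
          (lagrangeExtension N (shiftedNodes η x) ∘ nodeEquiv M N)).det :=
    (det_shiftEvalMatrix_append_X_pow η f x y).trans
      (det_alternant_eq_det_vandermonde_mul (nodeEquiv M N) hc fun i =>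
        shiftEval η f (Sum.elim x (y ∘ finSumFinEquiv) i))
  rw [hbasis, det_shiftEvalMatrix_lagrangeExtension η f x y hc hadd hsub hx hX,
    Vhat_comp_rev_mul, ← det_vandermonde_shiftedNodes_mul_prod_nodalWeight_mul_Vhat η x hc]
  ring

end SlavnovMatrix

end Slavnov

theorem stmt15 (M L : ℕ) (hML : M ≤ L) (η : ℂ) (hη : η ≠ 0)
    (x : Fin M → ℂ) (y : Fin L → ℂ)
    (hsq : ∀ i j : Fin (M + L), i ≠ j →
      (Fin.append x y i) ^ 2 ≠ (Fin.append x y j) ^ 2)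
    (hxsh : ∀ i j : Fin (M + M), i ≠ j →
      Fin.append (fun k => (x k + η / 2) ^ 2) (fun k => (x k - η / 2) ^ 2) i
        ≠ Fin.append (fun k => (x k + η / 2) ^ 2) (fun k => (x k - η / 2) ^ 2) j)
    (hyx : ∀ (i : Fin L) (k : Fin M),
      (y i + η / 2) ^ 2 ≠ (x k + η / 2) ^ 2 ∧
      (y i + η / 2) ^ 2 ≠ (x k - η / 2) ^ 2 ∧
      (y i - η / 2) ^ 2 ≠ (x k + η / 2) ^ 2 ∧
      (y i - η / 2) ^ 2 ≠ (x k - η / 2) ^ 2)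
    (hx1 : ∀ k : Fin M, 2 * x k + η ≠ 0)
    (hx2 : ∀ k m : Fin M, (x k - η) ^ 2 ≠ x m ^ 2) :
    ∀ f : ℂ → ℂ, Afun η (Fin.append x y) f = Sval η x y f := by
  intro f
  obtain ⟨N, rfl⟩ := Nat.exists_eq_add_of_le hML
  have hc : Function.Injective (Slavnov.shiftedNodes η x) :=
    (Slavnov.shiftedNodes_injective_iff η x).mpr (Function.injective_iff_pairwise_ne.mpr hxsh)
  have hadd (i) := (Slavnov.forall_ne_shiftedNodes_iff η x).mpr
    fun k => ⟨(hyx i k).2.1, (hyx i k).1⟩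
  have hsub (i) := (Slavnov.forall_ne_shiftedNodes_iff η x).mpr
    fun k => ⟨(hyx i k).2.2.2, (hyx i k).2.2.1⟩
  have hX (k) : Xfun x (x k - η) ≠ 0 := prod_ne_zero_iff.mpr fun m _ => sub_ne_zero.mpr (hx2 k m)
  have hnum := Slavnov.det_shiftEvalMatrix_append_X_pow_mul_Vhat η f x y hc hadd hsub hx1 hX
  have hVplus : Vhat (fun k => x k + η / 2) ≠ 0 :=
    Slavnov.Vhat_ne_zero_iff.mpr (Fin.append_injective_iff.mp hc).2.1
  have hVxy : Vhat (Fin.append x y) ≠ 0 :=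
    Slavnov.Vhat_ne_zero_iff.mpr (Function.injective_iff_pairwise_ne.mpr hsq)
  rw [Slavnov.Vhat_append] at hVxy
  obtain ⟨hVx, -, hVy⟩ := (mul_ne_zero_iff.mp hVxy).imp_right mul_ne_zero_iff.mp
  have hVrev := Slavnov.Vhat_comp_rev_ne_zero hVx
  rw [Slavnov.Afun_eq_det_shiftEvalMatrix_div_Vhat, Slavnov.Vhat_append, Sval, div_mul_eq_mul_div,
    div_div, div_eq_div_iff hVxy (mul_ne_zero hVplus (mul_ne_zero hVrev hVy))]
  linear_combination Vhat y * hnum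
end
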